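/- Fix integers n₊ ≥ 1 and n₋ ≥ 1 and set n = n₊ + n₋. For every positive integer k, the space E_B(−(kπ)²) consists exactly of the tuples f with f_j = 0 for 1 ≤ j ≤ n₊ and f_j(x) = c_j·sin(kπx) for n₊+1 ≤ j ≤ n, where the c_j ∈ ℂ satisfy ∑_{j=n₊+1}^{n} c_j = 0; in particular dim E_B(−(kπ)²) = n₋ − 1. -/

import Mathlib

/-- `InEigenspaceB np nm lam f` says that the tuple `f = (f₁, …, f_n)`, `n = np + nm`,
lies in the `λ`-eigenspace `E_B(λ)` of the indefinite Kirchhoff Laplacian `B`. -/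
def InEigenspaceB (np nm : ℕ) (lam : ℝ) (f : Fin (np + nm) → ℝ → ℂ) : Prop :=
  (∀ j, ContDiff ℝ 2 (f j)) ∧
  (∀ j : Fin (np + nm), (j : ℕ) < np →
    ∀ x : ℝ, deriv (deriv (f j)) x = -(lam : ℂ) * f j x) ∧
  (∀ j : Fin (np + nm), np ≤ (j : ℕ) →
    ∀ x : ℝ, deriv (deriv (f j)) x = (lam : ℂ) * f j x) ∧
  (∀ j, f j 1 = 0) ∧
  (∀ j k, f j 0 = f k 0) ∧
  (∑ j : Fin (np + nm), deriv (f j) 0 = 0)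

/-!
On a negative edge the equation is `f'' = -ω² f` with `ω = kπ`, so `f = f(0) cos(ωx) + c sin(ωx)`,
and `sin ω = 0` turns the Dirichlet condition at `1` into `f(0) = 0`. As there is at least one
negative edge, continuity makes every component vanish at the central vertex. On a positive edge
`f'' = ω² f` gives `f = c sinh(ωx)`, and `sinh ω ≠ 0` forces `f = 0`. The Kirchhoff condition then
reads `ω ∑ c_j = 0`, which cuts out a hyperplane in the space of coefficients.
-/

lemma exists_linearIndependent_spanning_of_finrank_eq {R M : Type*} [Ring R]
    [StrongRankCondition R] [AddCommGroup M] [Module R M] {S : Submodule R M} [Module.Free R S]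
    [Module.Finite R S] {d : ℕ} (hd : Module.finrank R S = d) :
    ∃ b : Fin d → M, (∀ i, b i ∈ S) ∧ LinearIndependent R b ∧
      ∀ v ∈ S, ∃ a : Fin d → R, v = ∑ i, a i • b i := by
  let b := Module.finBasisOfFinrankEq R S hd
  refine ⟨fun i ↦ b i, fun i ↦ (b i).2,
    b.linearIndependent.map' S.subtype S.ker_subtype, fun v hv ↦ ⟨b.repr ⟨v, hv⟩, ?_⟩⟩
  simpa only [AddSubmonoidClass.coe_finsetSum, Submodule.coe_smul] using
    congrArg Subtype.val (b.sum_repr ⟨v, hv⟩).symm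

section LinearODE

variable {f : ℝ → ℂ} {μ ω : ℂ}

lemma eq_mul_exp_of_hasDerivAt (hf : ∀ x, HasDerivAt f (μ * f x) x) (x : ℝ) :
    f x = f 0 * Complex.exp (μ * x) := by
  have hasDerivAt_exp (y : ℝ) :
      HasDerivAt (fun y : ℝ ↦ Complex.exp (-μ * y)) (Complex.exp (-μ * y) * (-μ * 1)) y :=
    ((hasDerivAt_id (y : ℂ)).const_mul (-μ)).cexp.comp_ofReal
  have hasDerivAt_quotient (y : ℝ) : HasDerivAt (fun y ↦ f y * Complex.exp (-μ * y)) 0 y :=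
    ((hf y).mul (hasDerivAt_exp y)).congr_deriv (by ring)
  have quotient_eq : f x * Complex.exp (-μ * x) = f 0 := by
    simpa using is_const_of_deriv_eq_zero (fun y ↦ (hasDerivAt_quotient y).differentiableAt)
      (fun y ↦ (hasDerivAt_quotient y).deriv) x 0
  rw [← quotient_eq, mul_assoc, ← Complex.exp_add, neg_mul, neg_add_cancel, Complex.exp_zero,
    mul_one]

-- `f'' = μ² f` factors as `(d/dx - μ)(f' + μ f) = 0`.
lemma deriv_add_mul_eq_mul_exp (hf : ContDiff ℝ 2 f)
    (hode : ∀ x, deriv (deriv f) x = μ ^ 2 * f x) (x : ℝ) :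
    deriv f x + μ * f x = (deriv f 0 + μ * f 0) * Complex.exp (μ * x) := by
  refine eq_mul_exp_of_hasDerivAt (f := fun x ↦ deriv f x + μ * f x) (fun y ↦ ?_) x
  have hasDerivAt_f := (hf.differentiable two_ne_zero y).hasDerivAt
  have hasDerivAt_deriv := (hf.differentiable_deriv_two y).hasDerivAt
  exact (hasDerivAt_deriv.add (hasDerivAt_f.const_mul μ)).congr_deriv (by rw [hode]; ring)

lemma mul_eq_cosh_add_sinh (hf : ContDiff ℝ 2 f)
    (hode : ∀ x, deriv (deriv f) x = μ ^ 2 * f x) (x : ℝ) :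
    μ * f x = μ * f 0 * Complex.cosh (μ * x) + deriv f 0 * Complex.sinh (μ * x) := by
  have growing := deriv_add_mul_eq_mul_exp hf hode x
  have decaying := deriv_add_mul_eq_mul_exp (μ := -μ) hf (by simpa only [neg_sq] using hode) x
  rw [← Complex.cosh_add_sinh] at growing
  rw [neg_mul μ (x : ℂ), ← Complex.cosh_sub_sinh] at decaying
  linear_combination (growing - decaying) / 2

lemma mul_eq_cos_add_sin (hf : ContDiff ℝ 2 f)
    (hode : ∀ x, deriv (deriv f) x = -ω ^ 2 * f x) (x : ℝ) :
    ω * f x = ω * f 0 * Complex.cos (ω * x) + deriv f 0 * Complex.sin (ω * x) := by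
  have hode' (y : ℝ) : deriv (deriv f) y = (ω * Complex.I) ^ 2 * f y := by
    rw [hode, mul_pow, Complex.I_sq, mul_neg_one]
  have hyperbolic := mul_eq_cosh_add_sinh hf hode' x
  rw [mul_right_comm ω _ (x : ℂ), Complex.cosh_mul_I, Complex.sinh_mul_I] at hyperbolic
  refine mul_right_cancel₀ Complex.I_ne_zero ?_
  linear_combination hyperbolic

lemma deriv_mul_sin (ω c : ℂ) :
    deriv (fun x : ℝ ↦ c * Complex.sin (ω * x)) = fun x : ℝ ↦ ω * c * Complex.cos (ω * x) := by
  funext x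
  refine (((hasDerivAt_id (x : ℂ)).const_mul ω).csin.const_mul c).comp_ofReal.deriv.trans ?_
  simp only [id_eq]
  ring

lemma deriv_mul_cos (ω c : ℂ) :
    deriv (fun x : ℝ ↦ c * Complex.cos (ω * x)) = fun x : ℝ ↦ -(ω * c) * Complex.sin (ω * x) := by
  funext x
  refine (((hasDerivAt_id (x : ℂ)).const_mul ω).ccos.const_mul c).comp_ofReal.deriv.trans ?_
  simp only [id_eq]
  ring

end LinearODE

/-- The conditions that a single edge function of the star graph satisfies on its own: it is a
`C²` solution of `f'' = q f` with the Dirichlet condition at the outer vertex `1`. Positive edges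
have `q = -λ`, negative edges `q = λ`. -/
structure IsEdgeSolution (q : ℂ) (f : ℝ → ℂ) : Prop where
  contDiff : ContDiff ℝ 2 f
  deriv_deriv : ∀ x, deriv (deriv f) x = q * f x
  apply_one : f 1 = 0

lemma isEdgeSolution_zero (q : ℂ) : IsEdgeSolution q 0 where
  contDiff := contDiff_const
  deriv_deriv := by simp
  apply_one := rfl

lemma isEdgeSolution_mul_sin {ω : ℂ} (hsin : Complex.sin ω = 0) (c : ℂ) :
    IsEdgeSolution (-ω ^ 2) (fun x : ℝ ↦ c * Complex.sin (ω * x)) where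
  contDiff := by
    have contDiff_sin : ContDiff ℝ 2 Complex.sin := Complex.contDiff_sin.restrict_scalars ℝ
    exact contDiff_const.mul
      (contDiff_sin.comp (contDiff_const.mul Complex.ofRealCLM.contDiff))
  deriv_deriv x := by
    rw [deriv_mul_sin, deriv_mul_cos]
    ring
  apply_one := by simp [hsin]

namespace IsEdgeSolution

variable {f : ℝ → ℂ} {ω : ℂ}

lemma eq_zero_of_sinh_ne_zero (hf : IsEdgeSolution (ω ^ 2) f) (hsinh : Complex.sinh ω ≠ 0)
    (h0 : f 0 = 0) : f = 0 := by
  have ω_ne_zero : ω ≠ 0 := by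
    rintro rfl
    exact hsinh Complex.sinh_zero
  have formula (x : ℝ) : ω * f x = deriv f 0 * Complex.sinh (ω * x) := by
    simpa [h0] using mul_eq_cosh_add_sinh hf.contDiff hf.deriv_deriv x
  have deriv_zero : deriv f 0 = 0 := by simpa [hf.apply_one, hsinh] using formula 1
  funext x
  simpa [deriv_zero, ω_ne_zero] using formula x

lemma apply_zero_of_sin_eq_zero (hf : IsEdgeSolution (-ω ^ 2) f) (hω : ω ≠ 0)
    (hsin : Complex.sin ω = 0) : f 0 = 0 := by
  have cos_ne_zero : Complex.cos ω ≠ 0 := fun hcos ↦ by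
    simpa [hsin, hcos] using Complex.sin_sq_add_cos_sq ω
  simpa [hf.apply_one, hsin, hω, cos_ne_zero] using
    mul_eq_cos_add_sin hf.contDiff hf.deriv_deriv 1

lemma eq_mul_sin (hf : IsEdgeSolution (-ω ^ 2) f) (hω : ω ≠ 0) (h0 : f 0 = 0) :
    f = fun x : ℝ ↦ deriv f 0 / ω * Complex.sin (ω * x) := by
  funext x
  have formula := mul_eq_cos_add_sin hf.contDiff hf.deriv_deriv x
  rw [h0, mul_zero, zero_mul, zero_add] at formula
  rw [div_mul_eq_mul_div, eq_div_iff hω, mul_comm, formula]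

end IsEdgeSolution

lemma inEigenspaceB_iff_isEdgeSolution {np nm : ℕ} {lam : ℝ} {f : Fin (np + nm) → ℝ → ℂ} :
    InEigenspaceB np nm lam f ↔
      (∀ i, IsEdgeSolution (-lam) (f (Fin.castAdd nm i))) ∧
      (∀ i, IsEdgeSolution lam (f (Fin.natAdd np i))) ∧
      (∀ j l, f j 0 = f l 0) ∧
      ∑ i, deriv (f (Fin.castAdd nm i)) 0 + ∑ i, deriv (f (Fin.natAdd np i)) 0 = 0 := by
  rw [← Fin.sum_univ_add fun j ↦ deriv (f j) 0]
  constructor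
  · rintro ⟨smooth, positive, negative, dirichlet, continuity, kirchhoff⟩
    exact ⟨fun i ↦ ⟨smooth _, positive _ (by simp), dirichlet _⟩,
      fun i ↦ ⟨smooth _, negative _ (by simp), dirichlet _⟩, continuity, kirchhoff⟩
  · rintro ⟨positive, negative, continuity, kirchhoff⟩
    refine ⟨?_, ?_, ?_, ?_, continuity, kirchhoff⟩
    · exact (Fin.forall_fin_add _).2 ⟨fun i ↦ (positive i).contDiff, fun i ↦ (negative i).contDiff⟩
    · exact fun j hj ↦ (positive ⟨j, hj⟩).deriv_deriv
    · refine (Fin.forall_fin_add _).2 ⟨fun i hi ↦ ?_, fun i _ ↦ (negative i).deriv_deriv⟩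
      exact absurd hi (by simp)
    · exact (Fin.forall_fin_add _).2
        ⟨fun i ↦ (positive i).apply_one, fun i ↦ (negative i).apply_one⟩

/-- The tuple that vanishes on the first `np` edges and is `c i * sin (ω x)` on the `i`-th of the
remaining `nm` edges, as a linear function of the coefficients `c`. -/
noncomputable def sineTuple (np nm : ℕ) (ω : ℝ) :
    (Fin nm → ℂ) →ₗ[ℂ] (Fin (np + nm) → ℝ → ℂ) where
  toFun c := Fin.append 0 fun i x ↦ c i * Complex.sin ((ω * x : ℝ) : ℂ)
  map_add' c d := by
    ext j x
    refine Fin.addCases (fun i ↦ ?_) (fun i ↦ ?_) j <;> simp [add_mul]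
  map_smul' a c := by
    ext j x
    refine Fin.addCases (fun i ↦ ?_) (fun i ↦ ?_) j <;> simp [mul_assoc]

/-- The space of tuples `sineTuple np nm ω c` whose coefficients `c` sum to zero; it is the
eigenspace `E_B(-ω²)` when `sin ω = 0`. -/
noncomputable def kirchhoffSineSpace (np nm : ℕ) (ω : ℝ) :
    Submodule ℂ (Fin (np + nm) → ℝ → ℂ) :=
  (LinearMap.ker (∑ i : Fin nm, LinearMap.proj i : (Fin nm → ℂ) →ₗ[ℂ] ℂ)).map
    (sineTuple np nm ω)

section SineTuple

variable {np nm : ℕ} {ω : ℝ} {f : Fin (np + nm) → ℝ → ℂ}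

@[simp]
lemma sineTuple_castAdd (c : Fin nm → ℂ) (i : Fin np) :
    sineTuple np nm ω c (Fin.castAdd nm i) = 0 := by
  simp [sineTuple]

@[simp]
lemma sineTuple_natAdd (c : Fin nm → ℂ) (i : Fin nm) :
    sineTuple np nm ω c (Fin.natAdd np i) = fun x : ℝ ↦ c i * Complex.sin (ω * x) := by
  simp [sineTuple]

lemma sineTuple_injective (hω : ω ≠ 0) : Function.Injective (sineTuple np nm ω) := by
  intro c d hcd
  funext i
  have quarter_period : (ω : ℂ) * (Real.pi / 2 / ω) = Real.pi / 2 :=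
    mul_div_cancel₀ _ (Complex.ofReal_ne_zero.2 hω)
  simpa [quarter_period] using
    congrFun (congrFun hcd (Fin.natAdd np i)) (Real.pi / 2 / ω)

lemma mem_kirchhoffSineSpace_iff :
    f ∈ kirchhoffSineSpace np nm ω ↔ ∃ c, ∑ i, c i = 0 ∧ sineTuple np nm ω c = f := by
  simp [kirchhoffSineSpace]

instance finiteDimensional_kirchhoffSineSpace :
    FiniteDimensional ℂ (kirchhoffSineSpace np nm ω) := by
  unfold kirchhoffSineSpace
  infer_instance

lemma finrank_kirchhoffSineSpace (hm : 1 ≤ nm) (hω : ω ≠ 0) :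
    Module.finrank ℂ (kirchhoffSineSpace np nm ω) = nm - 1 := by
  have sum_ne_zero : (∑ i : Fin nm, LinearMap.proj i : (Fin nm → ℂ) →ₗ[ℂ] ℂ) ≠ 0 := fun h ↦ by
    simpa using LinearMap.congr_fun h (Pi.single ⟨0, hm⟩ 1)
  have finrank_ker := Module.Dual.finrank_ker_add_one_of_ne_zero sum_ne_zero
  rw [Module.finrank_fin_fun] at finrank_ker
  rw [kirchhoffSineSpace, ← (Submodule.equivMapOfInjective _ (sineTuple_injective hω) _).finrank_eq]
  exact Nat.eq_sub_of_add_eq finrank_ker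

lemma inEigenspaceB_sineTuple (hsin : Real.sin ω = 0) {c : Fin nm → ℂ} (hc : ∑ i, c i = 0) :
    InEigenspaceB np nm (-ω ^ 2) (sineTuple np nm ω c) := by
  have sin_ω : Complex.sin ω = 0 := by rw [← Complex.ofReal_sin, hsin, Complex.ofReal_zero]
  have apply_zero : ∀ j, sineTuple np nm ω c j 0 = 0 := (Fin.forall_fin_add _).2 (by simp)
  refine inEigenspaceB_iff_isEdgeSolution.2 ⟨fun i ↦ ?_, fun i ↦ ?_, fun j l ↦ ?_, ?_⟩
  · rw [sineTuple_castAdd]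
    exact isEdgeSolution_zero _
  · rw [sineTuple_natAdd]
    exact_mod_cast isEdgeSolution_mul_sin sin_ω (c i)
  · rw [apply_zero, apply_zero]
  · simp only [sineTuple_castAdd, sineTuple_natAdd, deriv_mul_sin]
    simp [← Finset.mul_sum, hc]

lemma InEigenspaceB.mem_kirchhoffSineSpace (hf : InEigenspaceB np nm (-ω ^ 2) f) (hm : 1 ≤ nm)
    (hω : ω ≠ 0) (hsin : Real.sin ω = 0) : f ∈ kirchhoffSineSpace np nm ω := by
  have ω_ne_zero : (ω : ℂ) ≠ 0 := Complex.ofReal_ne_zero.2 hω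
  have sin_ω : Complex.sin ω = 0 := by rw [← Complex.ofReal_sin, hsin, Complex.ofReal_zero]
  have sinh_ω : Complex.sinh ω ≠ 0 := by
    rwa [← Complex.ofReal_sinh, Complex.ofReal_ne_zero, Ne, Real.sinh_eq_zero]
  obtain ⟨positive, negative, continuity, kirchhoff⟩ := inEigenspaceB_iff_isEdgeSolution.1 hf
  push_cast [neg_neg] at positive negative
  have apply_zero (j) : f j 0 = 0 := by
    rw [continuity j (Fin.natAdd np ⟨0, hm⟩)]
    exact (negative _).apply_zero_of_sin_eq_zero ω_ne_zero sin_ω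
  have positive_eq_zero (i) : f (Fin.castAdd nm i) = 0 :=
    (positive i).eq_zero_of_sinh_ne_zero sinh_ω (apply_zero _)
  refine mem_kirchhoffSineSpace_iff.2 ⟨fun i ↦ deriv (f (Fin.natAdd np i)) 0 / ω, ?_, ?_⟩
  · have sum_deriv : ∑ i, deriv (f (Fin.natAdd np i)) 0 = 0 := by
      simpa [positive_eq_zero] using kirchhoff
    rw [← Finset.sum_div, sum_deriv, zero_div]
  · refine funext <| (Fin.forall_fin_add _).2 ⟨fun i ↦ ?_, fun i ↦ ?_⟩
    · rw [sineTuple_castAdd, positive_eq_zero]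
    · rw [sineTuple_natAdd]
      exact ((negative i).eq_mul_sin ω_ne_zero (apply_zero _)).symm

lemma inEigenspaceB_iff_mem_kirchhoffSineSpace (hm : 1 ≤ nm) (hω : ω ≠ 0)
    (hsin : Real.sin ω = 0) :
    InEigenspaceB np nm (-ω ^ 2) f ↔ f ∈ kirchhoffSineSpace np nm ω := by
  refine ⟨fun hf ↦ hf.mem_kirchhoffSineSpace hm hω hsin, fun hf ↦ ?_⟩
  obtain ⟨c, hc, rfl⟩ := mem_kirchhoffSineSpace_iff.1 hf
  exact inEigenspaceB_sineTuple hsin hc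

lemma sum_filter_le_eq_sum_natAdd {M : Type*} [AddCommMonoid M] (c : Fin (np + nm) → M) :
    ∑ j ∈ Finset.univ.filter (fun j : Fin (np + nm) ↦ np ≤ (j : ℕ)), c j =
      ∑ i, c (Fin.natAdd np i) := by
  simp [Finset.sum_filter, Fin.sum_univ_add, (Fin.is_lt _).not_ge]

lemma mem_kirchhoffSineSpace_iff_exists_coeff :
    f ∈ kirchhoffSineSpace np nm ω ↔ ∃ c : Fin (np + nm) → ℂ,
      (∑ j ∈ Finset.univ.filter (fun j : Fin (np + nm) ↦ np ≤ (j : ℕ)), c j) = 0 ∧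
      (∀ j : Fin (np + nm), (j : ℕ) < np → f j = 0) ∧
      (∀ j : Fin (np + nm), np ≤ (j : ℕ) →
        f j = fun x : ℝ ↦ c j * Complex.sin ((ω * x : ℝ) : ℂ)) := by
  simp only [mem_kirchhoffSineSpace_iff, sum_filter_le_eq_sum_natAdd]
  constructor
  · rintro ⟨c, hc, rfl⟩
    refine ⟨Fin.append 0 c, by simpa using hc, ?_, ?_⟩ <;>
      exact (Fin.forall_fin_add _).2 (by simp)
  · rintro ⟨c, hc, positive, negative⟩
    refine ⟨fun i ↦ c (Fin.natAdd np i), hc,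
      funext <| (Fin.forall_fin_add _).2 ⟨fun i ↦ ?_, fun i ↦ ?_⟩⟩
    · rw [sineTuple_castAdd, positive _ (by simp)]
    · simp [negative]

end SineTuple

/-- `E_B(−(kπ)²)` consists exactly of the tuples `f` with `fⱼ = 0` on the first `n₊`
edges and `fⱼ(x) = cⱼ sin(kπx)` on the last `n₋` edges, where `∑_{j ≥ n₊} cⱼ = 0`; in
particular `dim E_B(−(kπ)²) = n₋ − 1` (expressed via a basis indexed by `Fin (n₋ − 1)`). -/
theorem stmt_11 (np nm : ℕ) (hp : 1 ≤ np) (hm : 1 ≤ nm) (k : ℕ) (hk : 0 < k) :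
    (∀ f : Fin (np + nm) → ℝ → ℂ,
      InEigenspaceB np nm (-(((k : ℝ) * Real.pi) ^ 2)) f ↔
        ∃ c : Fin (np + nm) → ℂ,
          (∑ j ∈ Finset.univ.filter (fun j : Fin (np + nm) => np ≤ (j : ℕ)), c j) = 0 ∧
          (∀ j : Fin (np + nm), (j : ℕ) < np → f j = 0) ∧
          (∀ j : Fin (np + nm), np ≤ (j : ℕ) →
            f j = fun x : ℝ => c j * Complex.sin (((k : ℝ) * Real.pi * x : ℝ) : ℂ))) ∧
    (∃ b : Fin (nm - 1) → (Fin (np + nm) → ℝ → ℂ),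
      (∀ i, InEigenspaceB np nm (-(((k : ℝ) * Real.pi) ^ 2)) (b i)) ∧
      LinearIndependent ℂ b ∧
      (∀ f, InEigenspaceB np nm (-(((k : ℝ) * Real.pi) ^ 2)) f →
        ∃ a : Fin (nm - 1) → ℂ, f = ∑ i : Fin (nm - 1), a i • b i)) := by
  have kπ_ne_zero : (k : ℝ) * Real.pi ≠ 0 := by positivity
  have eigenspace_eq (f) := inEigenspaceB_iff_mem_kirchhoffSineSpace (np := np) (f := f) hm
    kπ_ne_zero (Real.sin_nat_mul_pi k)
  refine ⟨fun f ↦ (eigenspace_eq f).trans mem_kirchhoffSineSpace_iff_exists_coeff, ?_⟩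
  obtain ⟨b, b_mem, b_independent, b_spans⟩ :=
    exists_linearIndependent_spanning_of_finrank_eq
      (finrank_kirchhoffSineSpace (np := np) hm kπ_ne_zero)
  exact ⟨b, fun i ↦ (eigenspace_eq _).2 (b_mem i), b_independent,
    fun f hf ↦ b_spans f ((eigenspace_eq f).1 hf)⟩
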